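/- arXiv:1109.0580 — 4 statements merged into one kernel-verified Lean document; each statement's English description precedes it below -/
import Mathlib

section
/- For every w ∈ W the system a(u_I,v_I) + b(v_I,p_I) = a(w,v_I) for all v_I ∈ U_I, b(u_I,q_I) = b(w,q_I) for all q_I ∈ Q_I, has a unique solution (u_I,p_I) ∈ U_I × Q_I, and the map P : W → W defined by P w = u_I is linear, idempotent (P ∘ P = P), has range exactly U_I, and satisfies P w = w for every w ∈ U_I. -/
/-!
The local system is a linear equation `saddle (u, p) = load w` between spaces of equal finite
dimension: `saddle : U_I × Q_I → U_I* × Q_I*`. Testing a homogeneous solution with `v = u` and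
`q = p` gives `a u u = 0`, hence `u = 0`, and the nondegeneracy of `b` on `U_I` then forces `p = 0`
(`saddle_injective`). So `saddle` is bijective, and `P` is the first component of
`saddle⁻¹ ∘ load`, a composite of linear maps. If `w ∈ U_I`, the solution is `(w, 0)`, so `P` fixes
`U_I`; idempotency and the range follow.
-/

/-- The operator of the local saddle-point system,
`(u, p) ↦ (v ↦ a(u, v) + b(v, p), q ↦ b(u, q))`, with `v` ranging over `U`. -/
noncomputable def saddle {W Q : Type*} [AddCommGroup W] [Module ℝ W] [AddCommGroup Q] [Module ℝ Q]
    (a : W →ₗ[ℝ] W →ₗ[ℝ] ℝ) (U : Submodule ℝ W) (b : W →ₗ[ℝ] Q →ₗ[ℝ] ℝ) :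
    (U × Q) →ₗ[ℝ] Module.Dual ℝ U × Module.Dual ℝ Q :=
  LinearMap.prod
    (LinearMap.coprod (a.domRestrict₁₂ U U) (b.domRestrict U).flip)
    (b.domRestrict U ∘ₗ LinearMap.fst ℝ U Q)

/-- The right-hand side of the local system, `w ↦ (v ↦ a(w, v), q ↦ b(w, q))`, with `v` ranging
over `U`. -/
noncomputable def load {W Q : Type*} [AddCommGroup W] [Module ℝ W] [AddCommGroup Q] [Module ℝ Q]
    (a : W →ₗ[ℝ] W →ₗ[ℝ] ℝ) (U : Submodule ℝ W) (b : W →ₗ[ℝ] Q →ₗ[ℝ] ℝ) :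
    W →ₗ[ℝ] Module.Dual ℝ U × Module.Dual ℝ Q :=
  LinearMap.prod (a.compl₂ U.subtype) b

section

variable {W Q : Type*} [AddCommGroup W] [Module ℝ W] [AddCommGroup Q] [Module ℝ Q]
  (a : W →ₗ[ℝ] W →ₗ[ℝ] ℝ) (U : Submodule ℝ W) (b : W →ₗ[ℝ] Q →ₗ[ℝ] ℝ)

theorem saddle_eq_load_iff (x : U × Q) (w : W) :
    saddle a U b x = load a U b w ↔
      (∀ v ∈ U, a (x.1 : W) v + b v x.2 = a w v) ∧ (∀ q : Q, b (x.1 : W) q = b w q) := by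
  simp [saddle, load, Prod.ext_iff, LinearMap.ext_iff, LinearMap.domRestrict₁₂_apply]

theorem saddle_injective (ha_pos : ∀ w : W, w ≠ 0 → 0 < a w w)
    (hb : ∀ q : Q, q ≠ 0 → ∃ v ∈ U, b v q ≠ 0) :
    Function.Injective (saddle a U b) := by
  rw [injective_iff_map_eq_zero]
  rintro ⟨u, p⟩ h
  rw [← map_zero (load a U b), saddle_eq_load_iff] at h
  obtain ⟨h₁, h₂⟩ := h
  simp only [map_zero, LinearMap.zero_apply] at h₁ h₂
  have hu : (u : W) = 0 := by
    by_contra hne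
    have h₃ := h₁ u u.2
    rw [h₂ p, add_zero] at h₃
    exact (ha_pos u hne).ne' h₃
  have hp : p = 0 := by
    by_contra hne
    obtain ⟨v, hv, hvp⟩ := hb p hne
    exact hvp (by simpa [hu] using h₁ v hv)
  exact Prod.ext (Subtype.ext hu) hp

end


/-- The Stokes harmonic projection: for every `w ∈ W` the local saddle-point
system has a unique solution `(u_I, p_I) ∈ U_I × Q_I`, and the resulting map
`P : W → W`, `P w = u_I`, is linear, idempotent, has range exactly `U_I`, and
restricts to the identity on `U_I`. -/
theorem stokes_harmonic_projection
    (W QI : Type*) [AddCommGroup W] [Module ℝ W] [FiniteDimensional ℝ W]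
    [AddCommGroup QI] [Module ℝ QI] [FiniteDimensional ℝ QI]
    (a : W →ₗ[ℝ] W →ₗ[ℝ] ℝ)
    (ha_symm : ∀ u v : W, a u v = a v u)
    (ha_pos : ∀ w : W, w ≠ 0 → 0 < a w w)
    (UI : Submodule ℝ W)
    (b : W →ₗ[ℝ] QI →ₗ[ℝ] ℝ)
    (hb : ∀ q : QI, q ≠ 0 → ∃ v ∈ UI, b v q ≠ 0) :
    (∀ w : W, ∃! up : UI × QI,
      (∀ v ∈ UI, a (up.1 : W) v + b v up.2 = a w v) ∧
      (∀ q : QI, b (up.1 : W) q = b w q)) ∧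
    ∃ P : W →ₗ[ℝ] W,
      (∀ w : W, P w ∈ UI ∧ ∃ p : QI,
        (∀ v ∈ UI, a (P w) v + b v p = a w v) ∧
        (∀ q : QI, b (P w) q = b w q)) ∧
      P ∘ₗ P = P ∧
      LinearMap.range P = UI ∧
      (∀ w ∈ UI, P w = w) := by
  have hinj := saddle_injective a UI b ha_pos hb
  have hdim : Module.finrank ℝ (UI × QI) =
      Module.finrank ℝ (Module.Dual ℝ UI × Module.Dual ℝ QI) := by
    simp [Subspace.dual_finrank_eq]
  let e := LinearEquiv.ofInjectiveOfFinrankEq (saddle a UI b) hinj hdim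
  have he : ∀ x, e x = saddle a UI b x := fun _ => rfl
  have hsol : ∀ w, saddle a UI b (e.symm (load a UI b w)) = load a UI b w := fun w => by
    rw [← he, e.apply_symm_apply]
  let P : W →ₗ[ℝ] W := UI.subtype ∘ₗ LinearMap.fst ℝ UI QI ∘ₗ e.symm.toLinearMap ∘ₗ load a UI b
  have hP : ∀ w, P w = ((e.symm (load a UI b w)).1 : W) := fun _ => rfl
  have hmem : ∀ w, P w ∈ UI := fun w => (e.symm (load a UI b w)).1.2
  have hfix : ∀ w ∈ UI, P w = w := by
    intro w hw
    -- For `w ∈ U_I` the pair `(w, 0)` solves the system.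
    have h : saddle a UI b (⟨w, hw⟩, 0) = load a UI b w := by
      rw [saddle_eq_load_iff]
      simp
    rw [hP, ← h, ← he, e.symm_apply_apply]
  refine ⟨fun w => ⟨e.symm (load a UI b w), (saddle_eq_load_iff a UI b _ w).1 (hsol w),
    fun y hy => hinj (((saddle_eq_load_iff a UI b y w).2 hy).trans (hsol w).symm)⟩,
    P, fun w => ⟨hmem w, (e.symm (load a UI b w)).2,
      (saddle_eq_load_iff a UI b _ w).1 (hsol w)⟩,
    LinearMap.ext fun w => hfix _ (hmem w), le_antisymm ?_ fun w hw => ⟨w, hfix w hw⟩, hfix⟩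
  rintro _ ⟨w, rfl⟩
  exact hmem w
end

section
/- Let P_a : W → W be the a-orthogonal projection onto U_I, i.e., P_a w ∈ U_I and a(P_a w, v_I) = a(w, v_I) for all v_I ∈ U_I, and let P : W → W be the Stokes harmonic projection defined by P w = u_I where (u_I,p_I) ∈ U_I × Q_I is the unique solution of a(u_I,v_I) + b(v_I,p_I) = a(w,v_I) for all v_I ∈ U_I and b(u_I,q_I) = b(w,q_I) for all q_I ∈ Q_I. Then there exists a constant c > 0 such that for every w ∈ W, c·‖(I−P)w‖_a ≤ ‖(I−P_a)w‖_a ≤ ‖(I−P)w‖_a, where ‖v‖_a = √(a(v,v)) denotes the energy norm. -/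
/-!
The upper bound is Pythagoras: `w - P w = (w - Pa w) + (Pa w - P w)`, where the second summand lies
in `UI`, to which the first is `a`-orthogonal. For the lower bound, `P` fixes `UI` pointwise
(`stokes_fixed`), so `(I - P) w = (I - P) (w - Pa w)`; being linear on a finite-dimensional space,
`I - P` is bounded in the energy norm (`exists_energy_bound`), and `c` is the inverse of a bound.
-/

/-- A linear endomorphism of a finite-dimensional space is bounded in the energy norm of any
positive definite symmetric form: that form is an inner product, and linear maps between
finite-dimensional normed spaces are continuous. -/
lemma exists_energy_bound {W : Type*} [AddCommGroup W] [Module ℝ W] [FiniteDimensional ℝ W]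
    (a : W →ₗ[ℝ] W →ₗ[ℝ] ℝ) (ha_symm : ∀ u v : W, a u v = a v u)
    (ha_pos : ∀ w : W, w ≠ 0 → 0 < a w w) (T : W →ₗ[ℝ] W) :
    ∃ C : ℝ, 0 < C ∧ ∀ w : W, Real.sqrt (a (T w) (T w)) ≤ C * Real.sqrt (a w w) := by
  let core : InnerProductSpace.Core ℝ W :=
    { inner := fun u v => a u v
      conj_inner_symm := fun u v => ha_symm v u
      re_inner_nonneg := fun w => by
        by_cases h : w = 0
        · simp [h]
        · exact (ha_pos w h).le
      add_left := fun u v w => by simp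
      smul_left := fun u v r => by simp
      definite := fun w h => by
        by_contra hw
        exact (ha_pos w hw).ne' h }
  let _ : NormedAddCommGroup W := core.toNormedAddCommGroup
  let _ : InnerProductSpace ℝ W := InnerProductSpace.ofCore core.toCore
  have hnorm : ∀ w : W, ‖w‖ = Real.sqrt (a w w) := fun w => norm_eq_sqrt_real_inner w
  let S : W →L[ℝ] W := LinearMap.toContinuousLinearMap T
  obtain ⟨C, hC, h⟩ := S.bound
  refine ⟨C, hC, fun w => ?_⟩
  rw [← hnorm, ← hnorm]
  exact h w

/-- The velocity `u'` solving the Stokes problem with data `u ∈ UI` is `u` itself: the error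
`u - u'` is an admissible test function annihilated by `b`, so testing with it removes the
pressure and leaves zero energy. -/
lemma stokes_fixed {W QI : Type*} [AddCommGroup W] [Module ℝ W] [AddCommGroup QI] [Module ℝ QI]
    (a : W →ₗ[ℝ] W →ₗ[ℝ] ℝ) (ha_pos : ∀ w : W, w ≠ 0 → 0 < a w w) (UI : Submodule ℝ W)
    (b : W →ₗ[ℝ] QI →ₗ[ℝ] ℝ) {u u' : W} (hu : u ∈ UI) (hu' : u' ∈ UI) {p : QI}
    (h1 : ∀ v ∈ UI, a u' v + b v p = a u v) (h2 : ∀ q : QI, b u' q = b u q) : u' = u := by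
  by_contra hne
  have hpos := ha_pos (u - u') (sub_ne_zero.mpr (Ne.symm hne))
  have htest := h1 (u - u') (UI.sub_mem hu hu')
  have hb0 : b (u - u') p = 0 := by simp [h2 p]
  have hexp : a (u - u') (u - u') = a u (u - u') - a u' (u - u') := by
    rw [map_sub a, LinearMap.sub_apply]
  linarith

/-- Comparison of energies of the Stokes harmonic and discrete harmonic parts
(Lemma 1 of the paper): there is `c > 0` such that for every `w ∈ W`,
`c ‖(I - P) w‖_a ≤ ‖(I - P_a) w‖_a ≤ ‖(I - P) w‖_a`, where `P_a` is the
`a`-orthogonal projection onto `U_I` and `P` is the Stokes harmonic projection. -/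
theorem energy_comparison_stokes_discrete_harmonic
    (W QI : Type*) [AddCommGroup W] [Module ℝ W] [FiniteDimensional ℝ W]
    [AddCommGroup QI] [Module ℝ QI] [FiniteDimensional ℝ QI]
    (a : W →ₗ[ℝ] W →ₗ[ℝ] ℝ)
    (ha_symm : ∀ u v : W, a u v = a v u)
    (ha_pos : ∀ w : W, w ≠ 0 → 0 < a w w)
    (UI : Submodule ℝ W)
    (b : W →ₗ[ℝ] QI →ₗ[ℝ] ℝ)
    (hb : ∀ q : QI, q ≠ 0 → ∃ v ∈ UI, b v q ≠ 0)
    (Pa : W →ₗ[ℝ] W)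
    (hPa : ∀ w : W, Pa w ∈ UI ∧ ∀ v ∈ UI, a (Pa w) v = a w v)
    (P : W →ₗ[ℝ] W)
    (hP : ∀ w : W, P w ∈ UI ∧ ∃ p : QI,
      (∀ v ∈ UI, a (P w) v + b v p = a w v) ∧
      (∀ q : QI, b (P w) q = b w q)) :
    ∃ c : ℝ, 0 < c ∧ ∀ w : W,
      c * Real.sqrt (a (w - P w) (w - P w)) ≤
          Real.sqrt (a (w - Pa w) (w - Pa w)) ∧
      Real.sqrt (a (w - Pa w) (w - Pa w)) ≤
          Real.sqrt (a (w - P w) (w - P w)) := by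
  obtain ⟨C, hC, hbound⟩ := exists_energy_bound a ha_symm ha_pos (LinearMap.id - P)
  refine ⟨C⁻¹, inv_pos.mpr hC, fun w => ⟨?_, ?_⟩⟩
  · have hfix : P (Pa w) = Pa w := by
      obtain ⟨hmem, p, h1, h2⟩ := hP (Pa w)
      exact stokes_fixed a ha_pos UI b (hPa w).1 hmem h1 h2
    have hT : (LinearMap.id - P : W →ₗ[ℝ] W) (w - Pa w) = w - P w := by
      simp [hfix]
    have h := hbound (w - Pa w)
    rw [hT] at h
    exact (inv_mul_le_iff₀ hC).mpr h
  · apply Real.sqrt_le_sqrt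
    have hmem : Pa w - P w ∈ UI := UI.sub_mem (hPa w).1 (hP w).1
    have horth : a (w - Pa w) (Pa w - P w) = 0 := by
      rw [map_sub a, LinearMap.sub_apply, (hPa w).2 _ hmem, sub_self]
    have hnonneg : 0 ≤ a (Pa w - P w) (Pa w - P w) := by
      by_cases h : Pa w - P w = 0
      · simp [h]
      · exact (ha_pos _ h).le
    have hpyth : a (w - P w) (w - P w)
        = a (w - Pa w) (w - Pa w) + a (Pa w - P w) (Pa w - P w) := by
      have horth' := ha_symm (w - Pa w) (Pa w - P w)
      have hsplit : w - P w = (w - Pa w) + (Pa w - P w) := by abel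
      rw [hsplit, map_add a, LinearMap.add_apply, map_add, map_add]
      linarith
    linarith
end

section
/- Let E : V → V be a linear operator with E ∘ E = E, set Ŵ = range E, and let E* denote the adjoint of E. Then the operator T = E ∘ E* maps Ŵ into Ŵ, and for every u ∈ Ŵ, ‖u‖² ≤ ⟨T u, u⟩ ≤ ‖E‖² ‖u‖², where ‖E‖ is the operator norm of E. -/
/-!
For every `u` the quadratic form is `⟪E (E* u), u⟫ = ‖E* u‖²`, so both bounds concern `‖E* u‖`.
If `u = E u`, then `‖u‖² = ⟪E u, u⟫ = ⟪u, E* u⟫`, and Cauchy-Schwarz gives `‖u‖ ≤ ‖E* u‖`.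
Conversely `‖E* u‖² = ⟪E (E* u), u⟫ ≤ ‖E‖ ‖E* u‖ ‖u‖` gives `‖E* u‖ ≤ ‖E‖ ‖u‖`.
-/

open scoped RealInnerProductSpace

/-- The abstract BDDC-preconditioned operator `T = E ∘ E*` maps the range
`Ŵ` of the projection `E` into itself, and on `Ŵ` its quadratic form is
bounded below by `‖u‖²` and above by `‖E‖² ‖u‖²`. -/
theorem preconditioned_operator_two_sided_bound
    (V : Type*) [NormedAddCommGroup V] [InnerProductSpace ℝ V]
    [FiniteDimensional ℝ V]
    (E : V →ₗ[ℝ] V) (hE : E ∘ₗ E = E) :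
    (∀ u ∈ LinearMap.range E,
        (E ∘ₗ LinearMap.adjoint E) u ∈ LinearMap.range E) ∧
    (∀ u ∈ LinearMap.range E,
        ‖u‖ ^ 2 ≤ ⟪(E ∘ₗ LinearMap.adjoint E) u, u⟫ ∧
        ⟪(E ∘ₗ LinearMap.adjoint E) u, u⟫ ≤
          ‖LinearMap.toContinuousLinearMap E‖ ^ 2 * ‖u‖ ^ 2) := by
  refine ⟨fun u _ => ⟨LinearMap.adjoint E u, rfl⟩, ?_⟩
  rintro u ⟨v, rfl⟩
  have hproj : E (E v) = E v := LinearMap.congr_fun hE v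
  generalize E v = u at hproj ⊢
  have hquad : ⟪(E ∘ₗ LinearMap.adjoint E) u, u⟫ = ‖LinearMap.adjoint E u‖ ^ 2 := by
    rw [LinearMap.comp_apply, ← LinearMap.adjoint_inner_right, real_inner_self_eq_norm_sq]
  have hlower : ‖u‖ ^ 2 ≤ ‖u‖ * ‖LinearMap.adjoint E u‖ := by
    calc ‖u‖ ^ 2 = ⟪u, LinearMap.adjoint E u⟫ := by
          rw [LinearMap.adjoint_inner_right, hproj, real_inner_self_eq_norm_sq]
      _ ≤ _ := real_inner_le_norm _ _
  have hupper : ‖LinearMap.adjoint E u‖ ^ 2 ≤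
      ‖LinearMap.toContinuousLinearMap E‖ * ‖LinearMap.adjoint E u‖ * ‖u‖ := by
    rw [← hquad]
    refine (real_inner_le_norm _ _).trans ?_
    gcongr
    exact (LinearMap.toContinuousLinearMap E).le_opNorm (LinearMap.adjoint E u)
  rw [hquad]
  have ha := norm_nonneg (LinearMap.adjoint E u)
  have hu := norm_nonneg u
  have hN := norm_nonneg (LinearMap.toContinuousLinearMap E)
  -- Each bound is linear after cancelling a common norm; when that norm vanishes it is trivial.
  constructor
  · have h : ‖u‖ ≤ ‖LinearMap.adjoint E u‖ := by
      by_contra! hlt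
      nlinarith
    gcongr
  · have h : ‖LinearMap.adjoint E u‖ ≤ ‖LinearMap.toContinuousLinearMap E‖ * ‖u‖ := by
      by_contra! hlt
      nlinarith [mul_nonneg hN hu]
    rw [← mul_pow]
    gcongr
end

section
/- Let Θ : V → V be a nonzero linear operator with Θ ∘ Θ = Θ, let Ŵ = range Θ, let Θ* be the adjoint of Θ with respect to the inner product, and set ω = sup over nonzero w ∈ V of ‖Θ w‖²/‖w‖² (so ω = ‖Θ‖²). Then the restriction T of Θ ∘ Θ* to Ŵ maps Ŵ into Ŵ, is self-adjoint and positive definite, every eigenvalue λ of T satisfies 1 ≤ λ ≤ ω, and consequently the spectral condition number κ = λ_max(T)/λ_min(T) satisfies κ ≤ ω. -/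
/-!
The key identity is `⟪Θ Θ* x, y⟫ = ⟪Θ* x, Θ* y⟫`, which gives symmetry and shows that the quadratic
form of `T` at `x` is `‖Θ* x‖²`. It is therefore enough to prove `‖x‖ ≤ ‖Θ* x‖ ≤ ‖Θ‖ ‖x‖` for `x` in
the range of `Θ`. The lower bound (`norm_le_norm_adjoint_of_apply_eq`) is Cauchy-Schwarz applied to
`‖x‖² = ⟪Θ x, x⟫ = ⟪x, Θ* x⟫`, since a projection fixes its range; the upper bound
(`norm_adjoint_le`) is the operator norm bound for the adjoint. Evaluating the form at an eigenvector
puts every eigenvalue in `[1, ‖Θ‖²]`, and the ratio of two numbers in `[1, ω]` is at most `ω`.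
-/

open scoped RealInnerProductSpace

section

variable {V : Type*} [NormedAddCommGroup V] [InnerProductSpace ℝ V] [FiniteDimensional ℝ V]

theorem norm_le_norm_adjoint_of_apply_eq (Θ : V →ₗ[ℝ] V) {x : V} (hx : Θ x = x) :
    ‖x‖ ≤ ‖LinearMap.adjoint Θ x‖ := by
  have h : ‖x‖ * ‖x‖ ≤ ‖x‖ * ‖LinearMap.adjoint Θ x‖ :=
    calc ‖x‖ * ‖x‖ = ⟪x, LinearMap.adjoint Θ x⟫ := by
          rw [LinearMap.adjoint_inner_right, hx, real_inner_self_eq_norm_mul_norm]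
      _ ≤ _ := real_inner_le_norm _ _
  rcases (norm_nonneg x).eq_or_lt with h0 | h0
  · rw [← h0]; exact norm_nonneg _
  · exact le_of_mul_le_mul_left h h0

theorem norm_adjoint_le (Θ : V →ₗ[ℝ] V) (x : V) :
    ‖LinearMap.adjoint Θ x‖ ≤ ‖LinearMap.toContinuousLinearMap Θ‖ * ‖x‖ := by
  set z := LinearMap.adjoint Θ x with hz
  have h : ‖z‖ * ‖z‖ ≤ ‖z‖ * (‖LinearMap.toContinuousLinearMap Θ‖ * ‖x‖) :=
    calc ‖z‖ * ‖z‖ = ⟪Θ z, x⟫ := by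
          rw [← LinearMap.adjoint_inner_right, ← hz, real_inner_self_eq_norm_mul_norm]
      _ ≤ ‖Θ z‖ * ‖x‖ := real_inner_le_norm _ _
      _ ≤ (‖LinearMap.toContinuousLinearMap Θ‖ * ‖z‖) * ‖x‖ := by
          gcongr
          exact (LinearMap.toContinuousLinearMap Θ).le_opNorm z
      _ = _ := by ring
  rcases (norm_nonneg z).eq_or_lt with h0 | h0
  · rw [← h0]; positivity
  · exact le_of_mul_le_mul_left h h0

end

/-- Abstract form of the two-level BDDC condition number bound (Theorem 1):
for a nonzero projection `Θ` with `ω = ‖Θ‖²`, the restriction `T` of `Θ ∘ Θ*`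
to `Ŵ = range Θ` maps `Ŵ` into itself, is self-adjoint and positive definite,
its eigenvalues lie in `[1, ω]`, and hence its spectral condition number
`λ_max / λ_min` is at most `ω`. -/
theorem two_level_bddc_condition_number_bound
    (V : Type*) [NormedAddCommGroup V] [InnerProductSpace ℝ V]
    [FiniteDimensional ℝ V]
    (Θ : V →ₗ[ℝ] V) (hΘ0 : Θ ≠ 0) (hΘ : Θ ∘ₗ Θ = Θ) :
    ∃ T : LinearMap.range Θ →ₗ[ℝ] LinearMap.range Θ,
      (∀ x : LinearMap.range Θ,
        (T x : V) = (Θ ∘ₗ LinearMap.adjoint Θ) (x : V)) ∧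
      LinearMap.IsSymmetric T ∧
      (∀ x : LinearMap.range Θ, x ≠ 0 → 0 < ⟪T x, x⟫) ∧
      (∀ lam : ℝ, Module.End.HasEigenvalue (T : Module.End ℝ (LinearMap.range Θ)) lam →
        1 ≤ lam ∧ lam ≤ ‖LinearMap.toContinuousLinearMap Θ‖ ^ 2) ∧
      (∀ lam₁ lam₂ : ℝ,
        Module.End.HasEigenvalue (T : Module.End ℝ (LinearMap.range Θ)) lam₁ →
        Module.End.HasEigenvalue (T : Module.End ℝ (LinearMap.range Θ)) lam₂ →
        lam₁ / lam₂ ≤ ‖LinearMap.toContinuousLinearMap Θ‖ ^ 2) := by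
  have hfix : ∀ x : LinearMap.range Θ, Θ (x : V) = x := by
    rintro ⟨_, y, rfl⟩
    exact LinearMap.congr_fun hΘ y
  let T : LinearMap.range Θ →ₗ[ℝ] LinearMap.range Θ :=
    (Θ ∘ₗ LinearMap.adjoint Θ).restrict fun x _ => LinearMap.mem_range_self Θ _
  have hT : ∀ x y : LinearMap.range Θ,
      ⟪T x, y⟫ = ⟪LinearMap.adjoint Θ (x : V), LinearMap.adjoint Θ (y : V)⟫ := by
    intro x y
    rw [LinearMap.adjoint_inner_right]
    rfl
  have hTT : ∀ x : LinearMap.range Θ, ⟪T x, x⟫ = ‖LinearMap.adjoint Θ (x : V)‖ ^ 2 := by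
    intro x
    rw [hT, real_inner_self_eq_norm_sq]
  have hlow : ∀ x : LinearMap.range Θ, ‖x‖ ^ 2 ≤ ⟪T x, x⟫ := by
    intro x
    rw [hTT]
    exact pow_le_pow_left₀ (norm_nonneg _) (norm_le_norm_adjoint_of_apply_eq Θ (hfix x)) 2
  have hup : ∀ x : LinearMap.range Θ,
      ⟪T x, x⟫ ≤ ‖LinearMap.toContinuousLinearMap Θ‖ ^ 2 * ‖x‖ ^ 2 := by
    intro x
    rw [hTT, ← mul_pow]
    exact pow_le_pow_left₀ (norm_nonneg _) (norm_adjoint_le Θ x) 2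
  have heig : ∀ lam : ℝ, Module.End.HasEigenvalue (T : Module.End ℝ (LinearMap.range Θ)) lam →
      1 ≤ lam ∧ lam ≤ ‖LinearMap.toContinuousLinearMap Θ‖ ^ 2 := by
    intro lam hlam
    obtain ⟨x, hx⟩ := hlam.exists_hasEigenvector
    have hpos : 0 < ‖x‖ ^ 2 := pow_pos (norm_pos_iff.mpr hx.2) 2
    have hform : ⟪T x, x⟫ = lam * ‖x‖ ^ 2 := by
      rw [hx.apply_eq_smul, real_inner_smul_left, real_inner_self_eq_norm_sq]
    have h1 := hlow x
    have h2 := hup x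
    rw [hform] at h1 h2
    exact ⟨le_of_mul_le_mul_right (by simpa using h1) hpos, le_of_mul_le_mul_right h2 hpos⟩
  refine ⟨T, fun _ => rfl, fun x y => ?_, fun x hx => ?_, heig, fun l₁ l₂ h₁ h₂ => ?_⟩
  · rw [hT, real_inner_comm (T y) x, hT, real_inner_comm]
  · exact (pow_pos (norm_pos_iff.mpr hx) 2).trans_le (hlow x)
  · have h₁' := heig l₁ h₁
    exact (div_le_self (zero_le_one.trans h₁'.1) (heig l₂ h₂).1).trans h₁'.2
end
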